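/- Let g ∈ S, γ ∈ Γ, h ∈ N⁺, l ∈ L and n ∈ N⁻ be such that γ·g = g·h·l·n and g·n⁻¹ ∈ S. Then l ∈ H(g). (In the paper's notation: if g⁻¹γg has Bruhat decomposition h·m·a·n with h ∈ N⁺, ma ∈ MA, n ∈ N⁻, then ma belongs to the transitivity group, so ζ_M(g⁻¹Γg ∩ W) is contained in the weak transitivity group H^w_Γ(g).) -/

import Mathlib

/-- `g'` is reachable from `g`. -/
def Reachable {G : Type*} [Group G] (Γ Nm Np : Subgroup G) (S : Set G) (g g' : G) : Prop :=
  ∃ hs : List G, (∀ h ∈ hs, h ∈ (↑Nm ∪ ↑Np : Set G)) ∧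
    (∀ r ≤ hs.length, g * (hs.take r).prod ∈ S) ∧
    ∃ γ ∈ Γ, γ * (g * hs.prod) = g'

namespace Reachable

variable {G : Type*} [Group G] {Γ Nm Np : Subgroup G} {S : Set G} {g g' g'' : G}

theorem mul_left {γ : G} (hg : g ∈ S) (hγ : γ ∈ Γ) : Reachable Γ Nm Np S g (γ * g) :=
  ⟨[], by simp, by simpa using hg, γ, hγ, by simp⟩

theorem mul_right {u : G} (hg : g ∈ S) (hgu : g * u ∈ S) (hu : u ∈ (↑Nm ∪ ↑Np : Set G)) :
    Reachable Γ Nm Np S g (g * u) := by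
  refine ⟨[u], by simpa using hu, fun r hr => ?_, 1, Γ.one_mem, by simp⟩
  rcases Nat.le_one_iff_eq_zero_or_eq_one.mp hr with rfl | rfl
  · simpa using hg
  · simpa using hgu

theorem trans (hSΓ : ∀ s ∈ S, ∀ γ ∈ Γ, γ * s ∈ S) (h₁ : Reachable Γ Nm Np S g g')
    (h₂ : Reachable Γ Nm Np S g' g'') : Reachable Γ Nm Np S g g'' := by
  obtain ⟨us, hus, hus_path, γ, hγ, rfl⟩ := h₁
  obtain ⟨vs, hvs, hvs_path, δ, hδ, rfl⟩ := h₂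
  -- The second path starts at a `Γ`-translate of the endpoint of the first.
  have translated_path (r : ℕ) (hr : r ≤ vs.length) : g * us.prod * (vs.take r).prod ∈ S := by
    simpa [mul_assoc] using hSΓ _ (hvs_path r hr) γ⁻¹ (Γ.inv_mem hγ)
  refine ⟨us ++ vs, fun u hu => (List.mem_append.mp hu).elim (hus u) (hvs u), fun r hr => ?_,
    δ * γ, Γ.mul_mem hδ hγ, by simp [mul_assoc]⟩
  rcases le_total r us.length with hle | hge
  · simpa [List.take_append_of_le_length hle] using hus_path r hle
  · have hr_vs : r - us.length ≤ vs.length := by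
      rw [List.length_append] at hr
      lia
    simpa [List.take_append, List.take_of_length_le hge, mul_assoc] using
      translated_path (r - us.length) hr_vs

end Reachable

theorem bruhat_levi_component_in_transitivity_set_general {G : Type*} [Group G]
    (Γ Nm Np : Subgroup G) (S : Set G) (hSΓ : ∀ s ∈ S, ∀ γ ∈ Γ, γ * s ∈ S)
    (g : G) (hg : g ∈ S) (γ : G) (hγ : γ ∈ Γ) (h : G) (hh : h ∈ Np)
    (l : G) (hl : ∀ u ∈ Np, l⁻¹ * u * l ∈ Np) (hgl : g * l ∈ S) (n : G) (hn : n ∈ Nm)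
    (hBruhat : γ * g = g * h * l * n) (hgn : g * n⁻¹ ∈ S) :
    Reachable Γ Nm Np S g (g * l) := by
  have translate_eq : γ * (g * n⁻¹) = g * h * l := by
    rw [← mul_assoc, hBruhat, mul_inv_cancel_right]
  have conj_eq : g * h * l * (l⁻¹ * h⁻¹ * l) = g * l := by group
  have hghl : g * h * l ∈ S := translate_eq ▸ hSΓ _ hgn γ hγ
  have horospherical_minus : Reachable Γ Nm Np S g (g * n⁻¹) :=
    .mul_right hg hgn (.inl (Nm.inv_mem hn))
  have translate : Reachable Γ Nm Np S (g * n⁻¹) (g * h * l) :=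
    translate_eq ▸ .mul_left hgn hγ
  have horospherical_plus : Reachable Γ Nm Np S (g * h * l) (g * l) :=
    conj_eq ▸ .mul_right hghl (conj_eq.symm ▸ hgl) (.inr (hl _ (Np.inv_mem hh)))
  exact (horospherical_minus.trans hSΓ translate).trans hSΓ horospherical_plus

/-- If `γ·g = g·h·l·n` with `γ ∈ Γ`, `h ∈ N⁺`, `l ∈ L`, `n ∈ N⁻`, and `g·n⁻¹ ∈ S`,
then `l` belongs to the transitivity set `H(g)`; i.e. the Levi components of Bruhat
decompositions of elements of `g⁻¹Γg` lie in the (weak) transitivity group. -/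
theorem bruhat_levi_component_in_transitivity_set {G : Type*} [Group G]
    (Γ Nm Np L : Subgroup G) (S : Set G)
    (hnormm : ∀ l ∈ L, ∀ n ∈ Nm, l * n * l⁻¹ ∈ Nm)
    (hnormp : ∀ l ∈ L, ∀ n ∈ Np, l * n * l⁻¹ ∈ Np)
    (hSΓ : ∀ s ∈ S, ∀ γ ∈ Γ, γ * s ∈ S)
    (hSL : ∀ s ∈ S, ∀ l ∈ L, s * l ∈ S)
    (g : G) (hg : g ∈ S)
    (γ : G) (hγ : γ ∈ Γ) (h : G) (hh : h ∈ Np) (l : G) (hl : l ∈ L)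
    (n : G) (hn : n ∈ Nm)
    (hBruhat : γ * g = g * h * l * n) (hgn : g * n⁻¹ ∈ S) :
    l ∈ L ∧ Reachable Γ Nm Np S g (g * l) :=
  ⟨hl, bruhat_levi_component_in_transitivity_set_general Γ Nm Np S hSΓ g hg γ hγ h hh l
    (fun u hu => by simpa using hnormp l⁻¹ (L.inv_mem hl) u hu) (hSL g hg l hl) n hn hBruhat hgn⟩
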